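/- arXiv:1412.7976 — 2 statements merged into one kernel-verified Lean document; each statement's English description precedes it below -/
import Mathlib

section
/- Let N ≥ 2, let Ω ⊂ ℝ^N be a bounded open set, and let p > 2. Let u : ℝ^N → ℝ be a Lipschitz function with A := ∫_{Ω ∩ {u>1}} |∇u|² dx > 0 and B := ∫_{Ω ∩ {u>1}} (u − 1)^p dx > 0, and set s_u := (A/B)^{1/(p−2)}. For s > 0 define ζ_s(x) = min(u(x), 1) + s (u(x) − 1)_+. Then: (i) J(ζ_s) < J(ζ_{s_u}) for every s > 0 with s ≠ s_u, so the map s ↦ J(ζ_s) attains its strict maximum on (0,∞) exactly at s = s_u; and (ii) J(ζ_s) → −∞ as s → ∞. -/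
open MeasureTheory Metric Set

/-- The free-boundary energy functional
`J(u) = ∫_Ω [ (1/2)|∇u|² + χ_{u>1} − (1/p)(u−1)₊^p ] dx`. -/
noncomputable def J {N : ℕ} (Ω : Set (EuclideanSpace ℝ (Fin N))) (p : ℝ)
    (u : EuclideanSpace ℝ (Fin N) → ℝ) : ℝ :=
  ∫ x in Ω, ((1 / 2) * ‖gradient u x‖ ^ 2
    + Set.indicator {y | 1 < u y} (fun _ => (1 : ℝ)) x
    - (1 / p) * (max (u x - 1) 0) ^ p)

/-!
On the superlevel set `{u > 1}` the gradient of `ζ_s` is `s ∇u`; elsewhere `ζ_s = u`, and the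
gradients agree almost everywhere, the exceptional points being those of the level set `{u = 1}`
where `u` or `(u - 1)₊` fails to be differentiable (a null set by Rademacher's theorem). Hence
`J(ζ_s) = A s² / 2 - B s ^ p / p + C` with `C` independent of `s`. After scaling by the critical
point `s_u`, strict maximality is Bernoulli's inequality for the exponent `p / 2 > 1`, and the limit
holds because `s ^ p` dominates `s²`.
-/

open Filter Topology

section RealPowers

variable {q p a b s : ℝ}

lemma rpow_div_sub_rpow_div_lt (hq : 0 < q) (hqp : q < p) (hs : 0 ≤ s) (hs1 : s ≠ 1) :
    s ^ q / q - s ^ p / p < 1 / q - 1 / p := by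
  have hp : 0 < p := hq.trans hqp
  have hsq : s ^ q ≠ 1 := by
    rwa [← Real.one_rpow q, Ne, Real.rpow_left_inj hs zero_le_one hq.ne']
  have bernoulli : 1 + p / q * (s ^ q - 1) < (1 + (s ^ q - 1)) ^ (p / q) :=
    one_add_mul_self_lt_rpow_one_add (by linarith [Real.rpow_nonneg hs q]) (sub_ne_zero.2 hsq)
      ((one_lt_div hq).2 hqp)
  rw [add_sub_cancel, ← Real.rpow_mul hs, mul_div_cancel₀ p hq.ne'] at bernoulli
  calc s ^ q / q - s ^ p / p
    _ < s ^ q / q - (1 + p / q * (s ^ q - 1)) / p := by gcongr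
    _ = 1 / q - 1 / p := by field_simp; ring

-- The point `(a / b) ^ (1 / (p - q))` is the positive zero of the derivative of
-- `s ↦ a * s ^ q / q - b * s ^ p / p`.
lemma mul_rpow_div_rpow_one_div_sub_eq (hpq : p ≠ q) (ha : 0 < a) (hb : 0 < b) :
    b * ((a / b) ^ (1 / (p - q))) ^ p = a * ((a / b) ^ (1 / (p - q))) ^ q := by
  set σ := (a / b) ^ (1 / (p - q))
  have hσ : σ ^ (p - q) = a / b := by
    rw [← Real.rpow_mul (by positivity), one_div_mul_cancel (sub_ne_zero.2 hpq), Real.rpow_one]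
  rw [Real.rpow_sub (by positivity), div_eq_div_iff (by positivity) hb.ne'] at hσ
  linarith

lemma mul_rpow_div_sub_mul_rpow_div_lt (hq : 0 < q) (hqp : q < p) (ha : 0 < a) (hb : 0 < b)
    (hs : 0 ≤ s) (hne : s ≠ (a / b) ^ (1 / (p - q))) :
    a * s ^ q / q - b * s ^ p / p
      < a * ((a / b) ^ (1 / (p - q))) ^ q / q - b * ((a / b) ^ (1 / (p - q))) ^ p / p := by
  have critical := mul_rpow_div_rpow_one_div_sub_eq hqp.ne' ha hb
  set σ := (a / b) ^ (1 / (p - q))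
  have hσ : 0 < σ := by positivity
  obtain ⟨t, rfl⟩ : ∃ t, s = t * σ := ⟨s / σ, (div_mul_cancel₀ s hσ.ne').symm⟩
  have ht : 0 ≤ t := nonneg_of_mul_nonneg_left hs hσ
  have ht1 : t ≠ 1 := by rintro rfl; exact hne (one_mul σ)
  calc a * (t * σ) ^ q / q - b * (t * σ) ^ p / p
    _ = a * σ ^ q * (t ^ q / q) - b * σ ^ p * (t ^ p / p) := by
      rw [Real.mul_rpow ht hσ.le, Real.mul_rpow ht hσ.le]; ring
    _ = a * σ ^ q * (t ^ q / q - t ^ p / p) := by rw [critical]; ring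
    _ < a * σ ^ q * (1 / q - 1 / p) := by
      gcongr ?_ * ?_
      exact rpow_div_sub_rpow_div_lt hq hqp ht ht1
    _ = a * σ ^ q / q - b * σ ^ p / p := by rw [critical]; ring

lemma tendsto_mul_rpow_sub_mul_rpow_atBot (hp : 0 < p) (hqp : q < p) (hb : 0 < b) :
    Tendsto (fun s : ℝ ↦ a * s ^ q - b * s ^ p) atTop atBot := by
  have factor_lim : Tendsto (fun s : ℝ ↦ a * s ^ (-(p - q)) - b) atTop (𝓝 (-b)) := by
    simpa using ((tendsto_rpow_neg_atTop (sub_pos.2 hqp)).const_mul a).sub_const b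
  refine ((tendsto_rpow_atTop hp).atTop_mul_neg (neg_lt_zero.2 hb) factor_lim).congr' ?_
  filter_upwards [eventually_gt_atTop 0] with s hs
  rw [show q = p + -(p - q) by ring, Real.rpow_add hs]
  ring_nf

end RealPowers

/-- The deformation `ζ_s = min (u, c) + s (u - c)₊` of a real-valued function `u`, which multiplies
by `s` its excess above the level `c`. The free boundary problem has `c = 1`. -/
def stretchAbove {α : Type*} (c s : ℝ) (u : α → ℝ) : α → ℝ :=
  fun x ↦ min (u x) c + s * max (u x - c) 0

section Pointwise

variable {α : Type*} {c s : ℝ} {u : α → ℝ} {x : α}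

lemma stretchAbove_of_le (h : u x ≤ c) : stretchAbove c s u x = u x := by
  simp [stretchAbove, h]

lemma stretchAbove_of_lt (h : c < u x) : stretchAbove c s u x = c + s * (u x - c) := by
  simp [stretchAbove, h.le]

lemma stretchAbove_eq_add (c s : ℝ) (u : α → ℝ) :
    stretchAbove c s u = fun x ↦ u x + (s - 1) * max (u x - c) 0 := by
  funext x
  rcases le_or_gt (u x) c with h | h
  · simp [stretchAbove_of_le h, h]
  · rw [stretchAbove_of_lt h, max_eq_left (sub_pos.2 h).le]
    ring

lemma lt_stretchAbove_iff (hs : 0 < s) : c < stretchAbove c s u x ↔ c < u x := by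
  rcases le_or_gt (u x) c with h | h
  · rw [stretchAbove_of_le h]
  · simp [stretchAbove_of_lt h, hs, h]

lemma max_stretchAbove_sub_zero (hs : 0 ≤ s) (x : α) :
    max (stretchAbove c s u x - c) 0 = s * max (u x - c) 0 := by
  rcases le_or_gt (u x) c with h | h
  · simp [stretchAbove_of_le h, h]
  · simp [stretchAbove_of_lt h, h.le, mul_nonneg hs]

end Pointwise

section Derivative

variable {E : Type*} [NormedAddCommGroup E] [NormedSpace ℝ E] {c s : ℝ} {u : E → ℝ} {x : E}

lemma fderiv_stretchAbove_of_lt (hu : ContinuousAt u x) (h : c < u x) :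
    fderiv ℝ (stretchAbove c s u) x = s • fderiv ℝ u x := by
  have near : stretchAbove c s u =ᶠ[𝓝 x] fun y ↦ c + s • (u y - c) :=
    (hu.eventually_const_lt h).mono fun _ hy ↦ stretchAbove_of_lt hy
  rw [near.fderiv_eq, fderiv_const_add]
  change fderiv ℝ (s • fun y ↦ u y - c) x = _
  rw [fderiv_const_smul_field, Pi.smul_apply, fderiv_sub_const]

lemma fderiv_stretchAbove_of_le (hu : DifferentiableAt ℝ u x)
    (hexcess : DifferentiableAt ℝ (fun y ↦ max (u y - c) 0) x) (h : u x ≤ c) :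
    fderiv ℝ (stretchAbove c s u) x = fderiv ℝ u x := by
  have excess_min : IsLocalMin (fun y ↦ max (u y - c) 0) x :=
    .of_forall fun y ↦ by simp [h]
  rw [stretchAbove_eq_add, fderiv_fun_add hu (hexcess.const_mul _), fderiv_const_mul hexcess,
    excess_min.fderiv_eq_zero, smul_zero, add_zero]

end Derivative

section Gradient

variable {E : Type*} [NormedAddCommGroup E] [InnerProductSpace ℝ E] {u : E → ℝ}

lemma norm_gradient_eq_norm_fderiv [CompleteSpace E] (u : E → ℝ) (x : E) :
    ‖gradient u x‖ = ‖fderiv ℝ u x‖ :=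
  LinearIsometryEquiv.norm_map _ _

variable [FiniteDimensional ℝ E] [MeasurableSpace E] [BorelSpace E] {μ : Measure E} {L : NNReal}
  {Ω : Set E}

lemma integrableOn_norm_gradient_pow_of_lipschitzWith (hu : LipschitzWith L u) (n : ℕ)
    (hΩ : μ Ω ≠ ⊤) : IntegrableOn (fun x ↦ ‖gradient u x‖ ^ n) Ω μ := by
  simp only [norm_gradient_eq_norm_fderiv]
  refine IntegrableOn.of_bound hΩ.lt_top
    ((measurable_fderiv ℝ u).norm.pow_const n).aestronglyMeasurable (L ^ n) (.of_forall fun x ↦ ?_)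
  rw [norm_pow, norm_norm]
  gcongr
  exact norm_fderiv_le_of_lipschitz ℝ hu

lemma norm_gradient_stretchAbove_sq_ae_eq [μ.IsAddHaarMeasure] (hu : LipschitzWith L u)
    (c s : ℝ) :
    (fun x ↦ ‖gradient (stretchAbove c s u) x‖ ^ 2) =ᵐ[μ] fun x ↦
      s ^ 2 * {x | c < u x}.indicator (fun x ↦ ‖gradient u x‖ ^ 2) x
        + {x | c < u x}ᶜ.indicator (fun x ↦ ‖gradient u x‖ ^ 2) x := by
  have hexcess := (hu.sub (LipschitzWith.const c)).max_const 0
  filter_upwards [hu.ae_differentiableAt, hexcess.ae_differentiableAt] with x hux hex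
  simp only [norm_gradient_eq_norm_fderiv]
  rcases le_or_gt (u x) c with h | h
  · simp [fderiv_stretchAbove_of_le hux hex h, h]
  · simp [fderiv_stretchAbove_of_lt hux.continuousAt h, h, norm_smul, mul_pow]

lemma integrableOn_norm_gradient_stretchAbove_sq [μ.IsAddHaarMeasure] (hu : LipschitzWith L u)
    (hgrad : IntegrableOn (fun x ↦ ‖gradient u x‖ ^ 2) Ω μ) (c s : ℝ) :
    IntegrableOn (fun x ↦ ‖gradient (stretchAbove c s u) x‖ ^ 2) Ω μ := by
  have hP : MeasurableSet {x | c < u x} :=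
    measurableSet_lt measurable_const hu.continuous.measurable
  exact (((hgrad.indicator hP).const_mul _).add (hgrad.indicator hP.compl)).congr
    (ae_restrict_of_ae (norm_gradient_stretchAbove_sq_ae_eq hu c s).symm)

lemma setIntegral_norm_gradient_stretchAbove_sq [μ.IsAddHaarMeasure] (hu : LipschitzWith L u)
    (hgrad : IntegrableOn (fun x ↦ ‖gradient u x‖ ^ 2) Ω μ) (c s : ℝ) :
    ∫ x in Ω, ‖gradient (stretchAbove c s u) x‖ ^ 2 ∂μ
      = s ^ 2 * ∫ x in Ω ∩ {x | c < u x}, ‖gradient u x‖ ^ 2 ∂μ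
        + ∫ x in Ω ∩ {x | c < u x}ᶜ, ‖gradient u x‖ ^ 2 ∂μ := by
  have hP : MeasurableSet {x | c < u x} :=
    measurableSet_lt measurable_const hu.continuous.measurable
  rw [integral_congr_ae (ae_restrict_of_ae (norm_gradient_stretchAbove_sq_ae_eq hu c s)),
    integral_add ((hgrad.indicator hP).const_mul _) (hgrad.indicator hP.compl), integral_const_mul,
    setIntegral_indicator hP, setIntegral_indicator hP.compl]

end Gradient

lemma setIntegral_max_sub_zero_rpow {α : Type*} [MeasurableSpace α] {μ : Measure α} {u : α → ℝ}
    {p : ℝ} (hp : p ≠ 0) (hu : Measurable u) (Ω : Set α) (c : ℝ) :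
    ∫ x in Ω, max (u x - c) 0 ^ p ∂μ = ∫ x in Ω ∩ {x | c < u x}, (u x - c) ^ p ∂μ := by
  have rpow_eq_indicator : ∀ x,
      max (u x - c) 0 ^ p = {x | c < u x}.indicator (fun x ↦ (u x - c) ^ p) x := fun x ↦ by
    rcases le_or_gt (u x) c with h | h
    · simp [h, Real.zero_rpow hp]
    · simp [h, h.le]
  simp only [rpow_eq_indicator, setIntegral_indicator (measurableSet_lt measurable_const hu)]

section Energy

variable {N : ℕ} {Ω : Set (EuclideanSpace ℝ (Fin N))} {p s : ℝ}
  {u : EuclideanSpace ℝ (Fin N) → ℝ} {L : NNReal}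

lemma J_eq_add_sub (hu : Measurable u)
    (hgrad : IntegrableOn (fun x ↦ ‖gradient u x‖ ^ 2) Ω)
    (hvol : volume (Ω ∩ {x | 1 < u x}) ≠ ⊤)
    (hpow : IntegrableOn (fun x ↦ max (u x - 1) 0 ^ p) Ω) :
    J Ω p u = 1 / 2 * (∫ x in Ω, ‖gradient u x‖ ^ 2) + volume.real (Ω ∩ {x | 1 < u x})
      - 1 / p * ∫ x in Ω, max (u x - 1) 0 ^ p := by
  have hP : MeasurableSet {x | 1 < u x} := measurableSet_lt measurable_const hu
  have hχ : IntegrableOn ({x | 1 < u x}.indicator fun _ ↦ (1 : ℝ)) Ω := by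
    rw [IntegrableOn, integrable_indicator_iff hP, IntegrableOn, Measure.restrict_restrict hP,
      inter_comm]
    exact integrableOn_const hvol
  unfold J
  rw [integral_sub ((hgrad.const_mul _).fun_add hχ) (hpow.const_mul _),
    integral_add (hgrad.const_mul _) hχ, integral_const_mul, integral_const_mul,
    setIntegral_indicator hP, setIntegral_const, smul_eq_mul, mul_one]

lemma J_stretchAbove (hs : 0 < s) (hu : LipschitzWith L u)
    (hgrad : IntegrableOn (fun x ↦ ‖gradient u x‖ ^ 2) Ω)
    (hvol : volume (Ω ∩ {x | 1 < u x}) ≠ ⊤)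
    (hpow : IntegrableOn (fun x ↦ max (u x - 1) 0 ^ p) Ω) :
    J Ω p (stretchAbove 1 s u)
      = (∫ x in Ω ∩ {x | 1 < u x}, ‖gradient u x‖ ^ 2) * s ^ 2 / 2
        - (∫ x in Ω, max (u x - 1) 0 ^ p) * s ^ p / p
        + (1 / 2 * (∫ x in Ω ∩ {x | 1 < u x}ᶜ, ‖gradient u x‖ ^ 2)
          + volume.real (Ω ∩ {x | 1 < u x})) := by
  have hmeas : Measurable (stretchAbove 1 s u) := by
    have := hu.continuous.measurable
    unfold stretchAbove
    fun_prop
  have hpow_eq : ∀ x, max (stretchAbove 1 s u x - 1) 0 ^ p = s ^ p * max (u x - 1) 0 ^ p :=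
    fun x ↦ by
      rw [max_stretchAbove_sub_zero hs.le, Real.mul_rpow hs.le (le_max_right _ _)]
  rw [J_eq_add_sub hmeas (integrableOn_norm_gradient_stretchAbove_sq hu hgrad 1 s)
      (by simpa only [lt_stretchAbove_iff hs] using hvol)
      (by simp only [hpow_eq]; exact hpow.const_mul _),
    setIntegral_norm_gradient_stretchAbove_sq hu hgrad]
  simp only [hpow_eq, integral_const_mul, lt_stretchAbove_iff hs]
  ring

end Energy

theorem stmt_4_general {N : ℕ} {Ω : Set (EuclideanSpace ℝ (Fin N))} {p : ℝ} (hp : 2 < p)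
    {u : EuclideanSpace ℝ (Fin N) → ℝ} {L : NNReal} (hu : LipschitzWith L u)
    (hgrad : IntegrableOn (fun x ↦ ‖gradient u x‖ ^ 2) Ω)
    (hvol : volume (Ω ∩ {x | 1 < u x}) ≠ ⊤)
    {A B : ℝ} (hA : A = ∫ x in Ω ∩ {x | 1 < u x}, ‖gradient u x‖ ^ 2)
    (hB : B = ∫ x in Ω ∩ {x | 1 < u x}, (u x - 1) ^ p) (hApos : 0 < A) (hBpos : 0 < B)
    {s_u : ℝ} (hsu : s_u = (A / B) ^ (1 / (p - 2))) :
    (∀ s : ℝ, 0 < s → s ≠ s_u →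
      J Ω p (stretchAbove 1 s u) < J Ω p (stretchAbove 1 s_u u)) ∧
    Tendsto (fun s : ℝ ↦ J Ω p (stretchAbove 1 s u)) atTop atBot := by
  have hp0 : 0 < p := two_pos.trans hp
  rw [← setIntegral_max_sub_zero_rpow hp0.ne' hu.continuous.measurable] at hB
  have hpow : IntegrableOn (fun x ↦ max (u x - 1) 0 ^ p) Ω :=
    .of_integral_ne_zero (hB ▸ hBpos.ne')
  obtain ⟨C, hJ⟩ : ∃ C, ∀ s : ℝ, 0 < s →
      J Ω p (stretchAbove 1 s u) = A * s ^ (2 : ℝ) / 2 - B * s ^ p / p + C := by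
    refine ⟨1 / 2 * (∫ x in Ω ∩ {x | 1 < u x}ᶜ, ‖gradient u x‖ ^ 2)
      + volume.real (Ω ∩ {x | 1 < u x}), fun s hs ↦ ?_⟩
    rw [J_stretchAbove hs hu hgrad hvol hpow, ← hA, ← hB, Real.rpow_two]
  constructor
  · intro s hs hne
    rw [hJ s hs, hJ s_u (by rw [hsu]; positivity), hsu]
    exact add_lt_add_left
      (mul_rpow_div_sub_mul_rpow_div_lt two_pos hp hApos hBpos hs.le (hsu ▸ hne)) C
  · have hlim := tendsto_mul_rpow_sub_mul_rpow_atBot (a := A / 2) hp0 hp (div_pos hBpos hp0)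
    refine (tendsto_atBot_add_const_right _ C hlim).congr' ?_
    filter_upwards [eventually_gt_atTop 0] with s hs
    rw [hJ s hs, mul_div_right_comm, mul_div_right_comm]

theorem stmt_4 {N : ℕ} (hN : 2 ≤ N) (Ω : Set (EuclideanSpace ℝ (Fin N)))
    (hΩo : IsOpen Ω) (hΩb : Bornology.IsBounded Ω) (p : ℝ) (hp : 2 < p)
    (u : EuclideanSpace ℝ (Fin N) → ℝ) (L : NNReal) (hu : LipschitzWith L u)
    (A B : ℝ)
    (hA : A = ∫ x in Ω ∩ {x | 1 < u x}, ‖gradient u x‖ ^ 2)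
    (hB : B = ∫ x in Ω ∩ {x | 1 < u x}, (u x - 1) ^ p)
    (hApos : 0 < A) (hBpos : 0 < B)
    (s_u : ℝ) (hsu : s_u = (A / B) ^ (1 / (p - 2))) :
    (∀ s : ℝ, 0 < s → s ≠ s_u →
      J Ω p (fun x => min (u x) 1 + s * max (u x - 1) 0)
        < J Ω p (fun x => min (u x) 1 + s_u * max (u x - 1) 0)) ∧
    Filter.Tendsto (fun s : ℝ => J Ω p (fun x => min (u x) 1 + s * max (u x - 1) 0))
      Filter.atTop Filter.atBot :=
  stmt_4_general hp hu (integrableOn_norm_gradient_pow_of_lipschitzWith hu 2 hΩb.measure_lt_top.ne)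
    (measure_ne_top_of_subset inter_subset_left hΩb.measure_lt_top.ne) hA hB hApos hBpos hsu
end

section
/- Let N ≥ 2, let Ω ⊂ ℝ^N be a bounded open set, and let p > 2. Let u : ℝ^N → ℝ be a Lipschitz function such that: the closure of {u > 1} is contained in Ω; u is twice continuously differentiable on the open set {u > 1} with −Δu = (u − 1)^{p−1} there; ∫_{Ω ∩ {u>1}} |∇u|² dx = ∫_{Ω ∩ {u>1}} (u − 1)^p dx > 0; and J(u) ≤ J(v) for every Lipschitz function v : ℝ^N → ℝ satisfying v = u on {u ≤ 1}, {v > 1} ⊆ {u > 1}, and ∫_{Ω ∩ {v>1}} |∇v|² dx = ∫_{Ω ∩ {v>1}} (v − 1)^p dx > 0. Then u is nondegenerate: there exist constants r₀ > 0 and c > 0 such that for every x₀ with u(x₀) > 1 and r := dist(x₀, {u ≤ 1}) ≤ r₀, one has u(x₀) ≥ 1 + c·r. -/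
open MeasureTheory Metric Set

/-- The Laplacian: sum of second partial derivatives. -/
noncomputable def lap {N : ℕ} (u : EuclideanSpace ℝ (Fin N) → ℝ)
    (x : EuclideanSpace ℝ (Fin N)) : ℝ :=
  ∑ i : Fin N, fderiv ℝ (fun y => fderiv ℝ u y (EuclideanSpace.single i 1)) x
    (EuclideanSpace.single i 1)

/-!
Above the free boundary `u` is governed by its bump `w = (u - 1)₊`, which minimizes the bump energy
on the Nehari manifold `∫ |∇w|² = ∫ w ^ p`. If `w` were at most `β * ρ` on a ball of radius `ρ`
contained in `{w > 0}`, truncating it to zero on the concentric half ball and dilating back to the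
Nehari manifold would cost energy of order `β ^ 2` times the volume of the ball, while saving the
volume of the half ball, which is a fixed fraction of it. For small `β` this contradicts minimality,
so `w` reaches height comparable to `r` somewhere in the ball of radius `r / 4` about `x₀`, where
`r` is the distance from `x₀` to `{u ≤ 1}`. Since `w` is Lipschitz and superharmonic in `{u > 1}`,
comparison with a Hopf barrier carries this lower bound to `x₀`.
-/

section SecondOrder

open Filter Topology Laplacian InnerProductSpace

lemma deriv_deriv_nonneg_of_isLocalMin {g : ℝ → ℝ} {a : ℝ} (hg : ContinuousAt g a)
    (hmin : IsLocalMin g a) : 0 ≤ deriv (deriv g) a := by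
  by_contra! hneg
  have hmax : IsLocalMax g a := isLocalMax_of_deriv_deriv_neg hneg hmin.deriv_eq_zero hg
  have hconst : g =ᶠ[𝓝 a] fun _ => g a := by
    filter_upwards [hmin, hmax] with t h₁ h₂ using le_antisymm h₂ h₁
  have hderiv : deriv g =ᶠ[𝓝 a] fun _ => 0 := by simpa using hconst.deriv
  simp [hderiv.deriv_eq] at hneg

lemma deriv_deriv_exp_quadratic (a b c : ℝ) :
    deriv (deriv fun t : ℝ => Real.exp (a + b * t + c * t ^ 2)) 0 =
      Real.exp a * (b ^ 2 + 2 * c) := by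
  have hfirst (t : ℝ) : HasDerivAt (fun t : ℝ => Real.exp (a + b * t + c * t ^ 2))
      (Real.exp (a + b * t + c * t ^ 2) * (b + 2 * c * t)) t := by
    refine HasDerivAt.exp ?_
    convert! ((((hasDerivAt_id t).const_mul b).const_add a).add
      (((hasDerivAt_id t).pow 2).const_mul c)) using 1
    simp only [mul_one, Nat.cast_ofNat, id_eq, Nat.add_one_sub_one, pow_one, add_right_inj]
    ring
  have hfactor : HasDerivAt (fun t : ℝ => b + 2 * c * t) (2 * c) 0 := by
    simpa using ((hasDerivAt_id (0 : ℝ)).const_mul (2 * c)).const_add b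
  rw [funext fun t => (hfirst t).deriv]
  refine ((hfirst 0).mul hfactor).deriv.trans ?_
  simp only [mul_zero, add_zero, ne_eq, OfNat.ofNat_ne_zero, not_false_eq_true, zero_pow]
  ring

lemma deriv_deriv_comp_add_smul {E F : Type*} [NormedAddCommGroup E] [NormedSpace ℝ E]
    [NormedAddCommGroup F] [NormedSpace ℝ F] {f : E → F} {x : E} (hf : ContDiffAt ℝ 2 f x)
    (v : E) :
    deriv (deriv fun t : ℝ => f (x + t • v)) 0 = iteratedFDeriv ℝ 2 f x ![v, v] := by
  have hline (t : ℝ) : HasDerivAt (fun t : ℝ => x + t • v) v t := by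
    simpa using ((hasDerivAt_id t).smul_const v).const_add x
  have hx : x + (0 : ℝ) • v = x := by simp
  have hlim : Tendsto (fun t : ℝ => x + t • v) (𝓝 0) (𝓝 x) := by
    simpa using (hline 0).continuousAt.tendsto
  have hfirst : (deriv fun t : ℝ => f (x + t • v)) =ᶠ[𝓝 0] fun t => fderiv ℝ f (x + t • v) v := by
    filter_upwards [hlim.eventually (hf.eventually (by simp))] with t ht
    exact ((ht.differentiableAt two_ne_zero).hasFDerivAt.comp_hasDerivAt t (hline t)).deriv
  have hsecond : HasFDerivAt (fderiv ℝ f) (fderiv ℝ (fderiv ℝ f) x) (x + (0 : ℝ) • v) := by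
    rw [hx]
    exact ((hf.fderiv_right (m := 1) (by norm_num)).differentiableAt one_ne_zero).hasFDerivAt
  rw [hfirst.deriv_eq, iteratedFDeriv_two_apply]
  have hcomp : HasDerivAt (fun t : ℝ => fderiv ℝ f (x + t • v)) (fderiv ℝ (fderiv ℝ f) x v) 0 :=
    hsecond.comp_hasDerivAt 0 (hline 0)
  have happly := hcomp.clm_apply (hasDerivAt_const (0 : ℝ) v)
  rw [happly.deriv]
  simp

lemma lap_eq_laplacian {N : ℕ} {u : EuclideanSpace ℝ (Fin N) → ℝ} {x : EuclideanSpace ℝ (Fin N)}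
    (hu : ContDiffAt ℝ 2 u x) : lap u x = Δ u x := by
  have hdiff : DifferentiableAt ℝ (fderiv ℝ u) x :=
    (hu.fderiv_right (m := 1) (by norm_num)).differentiableAt one_ne_zero
  rw [laplacian_eq_iteratedFDeriv_orthonormalBasis u (EuclideanSpace.basisFun (Fin N) ℝ), lap]
  refine Finset.sum_congr rfl fun i _ => ?_
  rw [fderiv_clm_apply hdiff (differentiableAt_const _)]
  simp [iteratedFDeriv_two_apply]

variable {E : Type*} [NormedAddCommGroup E] [InnerProductSpace ℝ E]

lemma contDiff_exp_neg_mul_norm_sub_sq {n : WithTop ℕ∞} (lam : ℝ) (y : E) :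
    ContDiff ℝ n fun x : E => Real.exp (-lam * ‖x - y‖ ^ 2) :=
  (contDiff_const.mul ((contDiff_id.sub contDiff_const).norm_sq ℝ)).exp

variable [FiniteDimensional ℝ E]

lemma laplacian_nonneg_of_isLocalMin {f : E → ℝ} {x : E} (hf : ContDiffAt ℝ 2 f x)
    (hmin : IsLocalMin f x) : 0 ≤ Δ f x := by
  rw [laplacian_eq_iteratedFDeriv_stdOrthonormalBasis]
  refine Finset.sum_nonneg fun i _ => ?_
  rw [← deriv_deriv_comp_add_smul hf]
  have hline : ContinuousAt (fun t : ℝ => x + t • stdOrthonormalBasis ℝ E i) 0 := by fun_prop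
  have hx : x + (0 : ℝ) • stdOrthonormalBasis ℝ E i = x := by simp
  refine deriv_deriv_nonneg_of_isLocalMin ?_ ?_
  · exact ContinuousAt.comp (by simpa using hf.continuousAt) hline
  · refine IsMinFilter.comp_tendsto (g := fun t : ℝ => x + t • stdOrthonormalBasis ℝ E i) ?_
      hline.tendsto
    rwa [hx]

lemma laplacian_exp_neg_mul_norm_sub_sq (lam : ℝ) (y x : E) :
    Δ (fun x : E => Real.exp (-lam * ‖x - y‖ ^ 2)) x =
      Real.exp (-lam * ‖x - y‖ ^ 2) *
        (4 * lam ^ 2 * ‖x - y‖ ^ 2 - 2 * lam * Module.finrank ℝ E) := by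
  have hline (i) : (fun t : ℝ => Real.exp (-lam * ‖x + t • stdOrthonormalBasis ℝ E i - y‖ ^ 2)) =
      fun t => Real.exp (-lam * ‖x - y‖ ^ 2
        + -2 * lam * inner ℝ (x - y) (stdOrthonormalBasis ℝ E i) * t + -lam * t ^ 2) := by
    funext t
    rw [add_sub_right_comm, norm_add_sq_real, inner_smul_right, norm_smul,
      (stdOrthonormalBasis ℝ E).norm_eq_one, mul_one, Real.norm_eq_abs, sq_abs]
    ring_nf
  rw [laplacian_eq_iteratedFDeriv_stdOrthonormalBasis]
  simp only [← deriv_deriv_comp_add_smul (contDiff_exp_neg_mul_norm_sub_sq lam y).contDiffAt,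
    hline, deriv_deriv_exp_quadratic, mul_pow]
  rw [← Finset.mul_sum, Finset.sum_add_distrib, ← Finset.mul_sum,
    (stdOrthonormalBasis ℝ E).sum_sq_inner_left]
  simp only [neg_mul, even_two, Even.neg_pow, mul_neg, Finset.sum_neg_distrib, Finset.sum_const,
    Finset.card_univ, Fintype.card_fin, nsmul_eq_mul, mul_eq_mul_left_iff, Real.exp_ne_zero,
    or_false]
  ring

lemma laplacian_exp_neg_mul_norm_sub_sq_pos {lam ρ : ℝ} {y x : E} (hlam : 0 < lam) (hρ : 0 ≤ ρ)
    (hdim : Module.finrank ℝ E ≤ 2 * lam * ρ ^ 2) (hx : x ∉ closedBall y ρ) :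
    0 < Δ (fun x : E => Real.exp (-lam * ‖x - y‖ ^ 2)) x := by
  rw [laplacian_exp_neg_mul_norm_sub_sq]
  have hρx : ρ ^ 2 < ‖x - y‖ ^ 2 := by
    rw [mem_closedBall, not_le, dist_eq_norm] at hx
    gcongr
  refine mul_pos (Real.exp_pos _) ?_
  nlinarith [mul_lt_mul_of_pos_left hρx (sq_pos_of_pos hlam)]

-- Hopf barrier: subtracting a multiple of a Gaussian that is strictly subharmonic on the annulus
-- rules out a minimum there.
lemma mul_exp_sub_exp_le_of_laplacian_nonpos {v : E → ℝ} {y : E} {ρ R a lam : ℝ} (hρ : 0 ≤ ρ)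
    (ha : 0 < a) (hlam : 0 < lam) (hdim : Module.finrank ℝ E ≤ 2 * lam * ρ ^ 2)
    (hcont : ContinuousOn v (closedBall y R))
    (hsmooth : ∀ x ∈ ball y R \ closedBall y ρ, ContDiffAt ℝ 2 v x)
    (hlap : ∀ x ∈ ball y R \ closedBall y ρ, Δ v x ≤ 0)
    (hinner : ∀ x ∈ closedBall y ρ, a ≤ v x) (houter : ∀ x ∈ sphere y R, 0 ≤ v x)
    {x : E} (hx : x ∈ closedBall y R) :
    a * (Real.exp (-lam * ‖x - y‖ ^ 2) - Real.exp (-lam * R ^ 2)) ≤ v x := by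
  set barrier : E → ℝ := fun x => Real.exp (-lam * ‖x - y‖ ^ 2) with hbarrier
  have hbarrier_smooth : ContDiff ℝ 2 barrier := contDiff_exp_neg_mul_norm_sub_sq lam y
  have hbarrier_le_one (x : E) : barrier x ≤ 1 :=
    Real.exp_le_one_iff.2 (by nlinarith [sq_nonneg ‖x - y‖])
  obtain ⟨z, hz, hzmin⟩ := (isCompact_closedBall y R).exists_isMinOn ⟨x, hx⟩
    (hcont.sub (hbarrier_smooth.continuous.const_smul a).continuousOn)
  have hzx : v z - a * barrier z ≤ v x - a * barrier x := hzmin hx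
  suffices hz_ge : -(a * Real.exp (-lam * R ^ 2)) ≤ v z - a * barrier z by linarith
  by_cases hzρ : z ∈ closedBall y ρ
  · have hexp_pos := mul_pos ha (Real.exp_pos (-lam * R ^ 2))
    nlinarith [hinner z hzρ, hbarrier_le_one z]
  rcases (mem_closedBall.1 hz).eq_or_lt with hzR | hzR
  · have hvz := houter z hzR
    simp only [hbarrier, ← dist_eq_norm, hzR]
    linarith
  exfalso
  have hvz : ContDiffAt ℝ 2 v z := hsmooth z ⟨hzR, hzρ⟩
  have hbz : ContDiffAt ℝ 2 barrier z := hbarrier_smooth.contDiffAt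
  have hlap_nonneg : 0 ≤ Δ (v - a • barrier) z :=
    laplacian_nonneg_of_isLocalMin (hvz.sub (hbz.const_smul a))
      (hzmin.isLocalMin (closedBall_mem_nhds_of_mem hzR))
  have hlap_sub : Δ (v - a • barrier) z = Δ v z - a * Δ barrier z := by
    rw [hvz.laplacian_sub (f₂ := a • barrier) (hbz.const_smul a), laplacian_smul a hbz, smul_eq_mul]
  have hlap_barrier : 0 < Δ barrier z := laplacian_exp_neg_mul_norm_sub_sq_pos hlam hρ hdim hzρ
  linarith [hlap z ⟨hzR, hzρ⟩, mul_pos ha hlap_barrier]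

lemma exists_mul_le_of_laplacian_nonpos_of_le_closedBall [Nontrivial E] {σ : ℝ} (hσ : 0 < σ) :
    ∃ c > 0, ∀ (v : E → ℝ) (y : E) (R a : ℝ), 0 < R → 0 < a → ContinuousOn v (closedBall y R) →
      (∀ x ∈ ball y R, ContDiffAt ℝ 2 v x) → (∀ x ∈ ball y R, Δ v x ≤ 0) →
      (∀ x ∈ sphere y R, 0 ≤ v x) → (∀ x ∈ closedBall y (σ * R), a ≤ v x) →
      ∀ x ∈ closedBall y (R / 2), c * a ≤ v x := by
  have hdim_pos : (0 : ℝ) < Module.finrank ℝ E := by exact_mod_cast Module.finrank_pos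
  obtain ⟨Λ, hΛ⟩ : ∃ Λ : ℝ, Λ = Module.finrank ℝ E / (2 * σ ^ 2) := ⟨_, rfl⟩
  have hΛ_pos : 0 < Λ := hΛ ▸ by positivity
  refine ⟨Real.exp (-Λ / 4) - Real.exp (-Λ), sub_pos.2 (Real.exp_lt_exp.2 (by linarith)), ?_⟩
  intro v y R a hR ha hcont hsmooth hlap houter hinner x hx
  have hbarrier := mul_exp_sub_exp_le_of_laplacian_nonpos (lam := Λ / R ^ 2) (by positivity) ha
    (by positivity) (by rw [hΛ]; field_simp; rfl) hcont
    (fun x hx => hsmooth x hx.1) (fun x hx => hlap x hx.1) hinner houter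
    (closedBall_subset_closedBall (half_le_self hR.le) hx)
  have hexp_outer : -(Λ / R ^ 2) * R ^ 2 = -Λ := by field_simp
  have hexp_inner : -Λ / 4 ≤ -(Λ / R ^ 2) * ‖x - y‖ ^ 2 := by
    calc -Λ / 4 = -(Λ / R ^ 2 * (R / 2) ^ 2) := by field_simp; norm_num
      _ ≤ -(Λ / R ^ 2 * ‖x - y‖ ^ 2) := by
        have hnorm : ‖x - y‖ ≤ R / 2 := by simpa [dist_eq_norm] using hx
        gcongr
      _ = -(Λ / R ^ 2) * ‖x - y‖ ^ 2 := by ring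
  rw [hexp_outer] at hbarrier
  calc (Real.exp (-Λ / 4) - Real.exp (-Λ)) * a
      ≤ a * (Real.exp (-(Λ / R ^ 2) * ‖x - y‖ ^ 2) - Real.exp (-Λ)) := by
        rw [mul_comm]
        gcongr
    _ ≤ v x := hbarrier

-- A weak Harnack inequality: the Lipschitz bound turns the value at `y` into a bound on a ball
-- around `y` of radius comparable to `r`, which superharmonicity propagates to `x₀`.
lemma exists_mul_le_of_laplacian_nonpos_of_lipschitzWith [Nontrivial E] (K : NNReal) {β : ℝ}
    (hβ : 0 < β) :
    ∃ c > 0, ∀ (v : E → ℝ) (x₀ y : E) (r : ℝ), LipschitzWith K v → 0 < r →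
      (∀ x ∈ ball x₀ r, ContDiffAt ℝ 2 v x) → (∀ x ∈ ball x₀ r, Δ v x ≤ 0) →
      (∀ x ∈ ball x₀ r, 0 ≤ v x) → y ∈ closedBall x₀ (r / 4) → β * r ≤ v y → c * r ≤ v x₀ := by
  obtain ⟨c, hc, hpropagate⟩ := exists_mul_le_of_laplacian_nonpos_of_le_closedBall (E := E)
    (σ := β / (K + 1)) (by positivity)
  refine ⟨c * (β / 2), by positivity, fun v x₀ y r hv hr hsmooth hlap hnonneg hy hvy => ?_⟩
  have hsubset : closedBall y (r / 2) ⊆ ball x₀ r :=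
    closedBall_subset_ball' (by linarith [mem_closedBall.1 hy])
  have hinner (x : E) (hx : x ∈ closedBall y (β / (K + 1) * (r / 2))) : β / 2 * r ≤ v x := by
    have hdist : K * dist x y ≤ β / 2 * r := by
      calc K * dist x y ≤ (K + 1) * (β / (K + 1) * (r / 2)) := by
            gcongr
            · linarith
            · exact hx
        _ = β / 2 * r := by field_simp
    have habs : |v x - v y| ≤ β / 2 * r := (hv.dist_le_mul x y).trans hdist
    linarith [(abs_le.1 habs).1]
  have hle := hpropagate v y (r / 2) (β / 2 * r) (by positivity) (by positivity)
    hv.continuous.continuousOn (fun x hx => hsmooth x (hsubset (ball_subset_closedBall hx)))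
    (fun x hx => hlap x (hsubset (ball_subset_closedBall hx)))
    (fun x hx => hnonneg x (hsubset (sphere_subset_closedBall hx))) hinner x₀
    (mem_closedBall'.2 ((mem_closedBall.1 hy).trans (by linarith)))
  rwa [mul_assoc]

end SecondOrder

section Excess

variable {α : Type*} {u : α → ℝ} {x : α}

/-- The positive part `(u - 1)₊`, the bump of `u` above the free boundary. -/
noncomputable def excess (u : α → ℝ) (x : α) : ℝ := max (u x - 1) 0

lemma excess_nonneg : 0 ≤ excess u x := le_max_right _ _

lemma excess_of_le (hx : u x ≤ 1) : excess u x = 0 := max_eq_right (by linarith)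

lemma excess_of_ge (hx : 1 ≤ u x) : excess u x = u x - 1 := max_eq_left (by linarith)

lemma excess_pos_iff : 0 < excess u x ↔ 1 < u x := by simp [excess]

lemma support_excess_subset : Function.support (excess u) ⊆ {x | 1 < u x} :=
  fun _ hx => excess_pos_iff.1 (excess_nonneg.lt_of_ne' hx)

lemma min_one_add_excess (u : α → ℝ) (x : α) : min (u x) 1 + excess u x = u x := by
  rcases le_total (u x) 1 with hx | hx
  · simp [hx, excess_of_le hx]
  · simp [hx, excess_of_ge hx]

lemma lipschitzWith_excess [PseudoEMetricSpace α] {K : NNReal} (hu : LipschitzWith K u) :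
    LipschitzWith K (excess u) := by
  have hsub : LipschitzWith K fun x => u x - 1 := by
    simpa using hu.sub (LipschitzWith.const (1 : ℝ))
  exact hsub.max_const 0

end Excess

section BumpEnergy

variable {E : Type*} [NormedAddCommGroup E] [NormedSpace ℝ E] {φ f g : E → ℝ} {x : E}

lemma fderiv_eq_zero_of_nonneg_of_eq_zero (hφ : ∀ y, 0 ≤ φ y) (hx : φ x = 0) :
    fderiv ℝ φ x = 0 :=
  IsLocalMin.fderiv_eq_zero (Filter.Eventually.of_forall fun y => hx ▸ hφ y)

lemma fderiv_excess_of_le (hx : f x ≤ 1) : fderiv ℝ (excess f) x = 0 :=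
  fderiv_eq_zero_of_nonneg_of_eq_zero (fun _ => excess_nonneg) (excess_of_le hx)

lemma fderiv_min_one_of_ge (hx : 1 ≤ f x) : fderiv ℝ (fun y => min (f y) 1) x = 0 :=
  IsLocalMax.fderiv_eq_zero (Filter.Eventually.of_forall fun y => by simp [hx])

lemma fderiv_min_of_le (hf : DifferentiableAt ℝ f x)
    (hmin : DifferentiableAt ℝ (fun y => min (f y) (g y)) x) (hx : f x ≤ g x) :
    fderiv ℝ (fun y => min (f y) (g y)) x = fderiv ℝ f x := by
  have hzero : fderiv ℝ (f - fun y => min (f y) (g y)) x = 0 :=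
    fderiv_eq_zero_of_nonneg_of_eq_zero (fun y => by simp) (by simp [hx])
  rw [fderiv_sub hf hmin, sub_eq_zero] at hzero
  exact hzero.symm

lemma integrable_rpow {X : Type*} [TopologicalSpace X] [MeasurableSpace X] [OpensMeasurableSpace X]
    (μ : Measure X) [IsFiniteMeasureOnCompacts μ] {φ : X → ℝ} (hφ : Continuous φ)
    (hsupp : HasCompactSupport φ) {p : ℝ} (hp : 0 < p) :
    Integrable (fun x => φ x ^ p) μ :=
  (hφ.rpow_const fun _ => .inr hp.le).integrable_of_hasCompactSupport
    (hsupp.comp_left (g := fun t : ℝ => t ^ p) (Real.zero_rpow hp.ne'))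

variable [MeasurableSpace E] (μ : Measure E)

/-- The Dirichlet integral `∫ |∇φ|²` over the whole space. -/
noncomputable def dirichletIntegral (φ : E → ℝ) : ℝ := ∫ x, ‖fderiv ℝ φ x‖ ^ 2 ∂μ

/-- The integral `∫ φ ^ p` over the whole space, used for `0 ≤ φ`. -/
noncomputable def powIntegral {X : Type*} [MeasurableSpace X] (μ : Measure X) (p : ℝ)
    (φ : X → ℝ) : ℝ :=
  ∫ x, φ x ^ p ∂μ

/-- The energy of a nonnegative bump `φ` above the free boundary: the part of `J` that sees only
`(u - 1)₊ = φ`. -/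
noncomputable def bumpEnergy (p : ℝ) (φ : E → ℝ) : ℝ :=
  1 / 2 * dirichletIntegral μ φ + μ.real {x | 0 < φ x} - 1 / p * powIntegral μ p φ

/-- `w` minimizes the bump energy on the Nehari manifold `∫ |∇φ|² = ∫ φ ^ p > 0`, among the
Lipschitz bumps `φ` that live where `w` does. -/
structure IsBumpMinimizer (p : ℝ) (w : E → ℝ) : Prop where
  nehari : dirichletIntegral μ w = powIntegral μ p w
  pos : 0 < dirichletIntegral μ w
  bumpEnergy_le : ∀ φ : E → ℝ, (∃ K, LipschitzWith K φ) → (∀ x, 0 ≤ φ x) →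
    (∀ x, 0 < φ x → 0 < w x) → dirichletIntegral μ φ = powIntegral μ p φ →
    0 < dirichletIntegral μ φ → bumpEnergy μ p w ≤ bumpEnergy μ p φ

variable {μ}

lemma bumpEnergy_eq_of_nehari {p : ℝ} (hφ : dirichletIntegral μ φ = powIntegral μ p φ) :
    bumpEnergy μ p φ = (1 / 2 - 1 / p) * dirichletIntegral μ φ + μ.real {x | 0 < φ x} := by
  rw [bumpEnergy, ← hφ]
  ring

lemma dirichletIntegral_const_mul (t : ℝ) :
    dirichletIntegral μ (fun x => t * φ x) = t ^ 2 * dirichletIntegral μ φ := by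
  have hfderiv (x : E) : fderiv ℝ (fun x => t * φ x) x = t • fderiv ℝ φ x :=
    congrFun (fderiv_const_smul_field (f := φ) t) x
  simp only [dirichletIntegral, hfderiv, norm_smul, mul_pow, Real.norm_eq_abs, sq_abs,
    integral_const_mul]

lemma powIntegral_const_mul {X : Type*} [MeasurableSpace X] {μ : Measure X} {φ : X → ℝ} {t p : ℝ}
    (ht : 0 ≤ t) (hφ : ∀ x, 0 ≤ φ x) :
    powIntegral μ p (fun x => t * φ x) = t ^ p * powIntegral μ p φ := by
  simp only [powIntegral, Real.mul_rpow ht (hφ _), integral_const_mul]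

lemma exists_pos_sq_mul_eq_rpow_mul {p a b : ℝ} (hp : 2 < p) (ha : 0 < a) (hb : 0 < b) :
    ∃ t > 0, t ^ 2 * a = t ^ p * b ∧ t ^ 2 = (a / b) ^ (2 / (p - 2)) := by
  have hp' : p - 2 ≠ 0 := by linarith
  have hab : 0 < a / b := by positivity
  obtain ⟨t, ht⟩ : ∃ t, t = (a / b) ^ (1 / (p - 2)) := ⟨_, rfl⟩
  have ht_pos : 0 < t := ht ▸ Real.rpow_pos_of_pos hab _
  have ht_rpow : t ^ (p - 2) = a / b := by
    rw [ht, ← Real.rpow_mul hab.le, one_div_mul_cancel hp', Real.rpow_one]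
  refine ⟨t, ht_pos, ?_, ?_⟩
  · calc t ^ 2 * a = t ^ (2 : ℝ) * t ^ (p - 2) * b := by rw [ht_rpow, Real.rpow_two]; field_simp
      _ = t ^ p * b := by rw [← Real.rpow_add ht_pos, add_sub_cancel]
  · rw [← Real.rpow_two, ht, ← Real.rpow_mul hab.le]
    ring_nf

-- Compare `w` with the dilate `t • φ` that lies on the Nehari manifold.
lemma IsBumpMinimizer.le_of_pos {p : ℝ} {w : E → ℝ} (hw : IsBumpMinimizer μ p w) (hp : 2 < p)
    {K : NNReal} (hφ : LipschitzWith K φ) (hφ_nonneg : ∀ x, 0 ≤ φ x)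
    (hφ_pos : ∀ x, 0 < φ x → 0 < w x)
    (hD : 0 < dirichletIntegral μ φ) (hP : 0 < powIntegral μ p φ) :
    (1 / 2 - 1 / p) * dirichletIntegral μ w + μ.real {x | 0 < w x} ≤
      (1 / 2 - 1 / p) * ((dirichletIntegral μ φ / powIntegral μ p φ) ^ (2 / (p - 2)) *
        dirichletIntegral μ φ) + μ.real {x | 0 < φ x} := by
  obtain ⟨t, ht, hnehari, ht_sq⟩ := exists_pos_sq_mul_eq_rpow_mul hp hD hP
  have hD_smul : dirichletIntegral μ (fun x => t * φ x) = t ^ 2 * dirichletIntegral μ φ :=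
    dirichletIntegral_const_mul t
  have hnehari_smul :
      dirichletIntegral μ (fun x => t * φ x) = powIntegral μ p (fun x => t * φ x) := by
    rw [hD_smul, powIntegral_const_mul ht.le hφ_nonneg, hnehari]
  have hle := hw.bumpEnergy_le (fun x => t * φ x) ⟨_, (lipschitzWith_smul t).comp hφ⟩
    (fun x => mul_nonneg ht.le (hφ_nonneg x)) (fun x hx => hφ_pos x (pos_of_mul_pos_right hx ht.le))
    hnehari_smul (by rw [hD_smul]; positivity)
  rw [bumpEnergy_eq_of_nehari hw.nehari, bumpEnergy_eq_of_nehari hnehari_smul, hD_smul,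
    ht_sq] at hle
  simpa only [mul_pos_iff_of_pos_left ht] using hle

variable [FiniteDimensional ℝ E] [BorelSpace E] (μ)

lemma integrableOn_norm_fderiv_sq [IsFiniteMeasureOnCompacts μ] {K : NNReal}
    (hφ : LipschitzWith K φ) {s : Set E} (hs : Bornology.IsBounded s) :
    IntegrableOn (fun x => ‖fderiv ℝ φ x‖ ^ 2) s μ := by
  refine Measure.integrableOn_of_bounded (M := (K : ℝ) ^ 2) hs.measure_lt_top.ne
    ((measurable_fderiv ℝ φ).norm.pow_const 2).aestronglyMeasurable (.of_forall fun x => ?_)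
  rw [Real.norm_of_nonneg (by positivity)]
  gcongr
  exact norm_fderiv_le_of_lipschitz ℝ hφ

lemma integrable_norm_fderiv_sq [IsFiniteMeasureOnCompacts μ] {K : NNReal}
    (hφ : LipschitzWith K φ) (hsupp : HasCompactSupport φ) :
    Integrable (fun x => ‖fderiv ℝ φ x‖ ^ 2) μ := by
  refine (integrableOn_iff_integrable_of_support_subset fun x hx => ?_).1
    (integrableOn_norm_fderiv_sq μ hφ hsupp.isCompact.isBounded)
  exact support_fderiv_subset ℝ fun h => hx (by simp [h])

lemma integrable_bumpEnergy_density_and_integral_eq [IsFiniteMeasureOnCompacts μ] {K : NNReal}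
    (hφ : LipschitzWith K φ) (hsupp : HasCompactSupport φ) {p : ℝ} (hp : 0 < p) :
    Integrable (fun x => 1 / 2 * ‖fderiv ℝ φ x‖ ^ 2
      + indicator {y | 0 < φ y} (fun _ => (1 : ℝ)) x - 1 / p * φ x ^ p) μ ∧
    ∫ x, (1 / 2 * ‖fderiv ℝ φ x‖ ^ 2
      + indicator {y | 0 < φ y} (fun _ => (1 : ℝ)) x - 1 / p * φ x ^ p) ∂μ = bumpEnergy μ p φ := by
  have hpos_meas : MeasurableSet {x | 0 < φ x} :=
    (isOpen_lt continuous_const hφ.continuous).measurableSet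
  have hpos_bdd : Bornology.IsBounded {x | 0 < φ x} :=
    hsupp.isCompact.isBounded.subset fun x hx => subset_tsupport φ (ne_of_gt hx)
  have hgrad := (integrable_norm_fderiv_sq μ hφ hsupp).const_mul (1 / 2)
  have hind : Integrable (indicator {y | 0 < φ y} fun _ => (1 : ℝ)) μ :=
    (integrable_indicator_iff hpos_meas).2 (integrableOn_const hpos_bdd.measure_lt_top.ne)
  have hpow := (integrable_rpow μ hφ.continuous hsupp hp).const_mul (1 / p)
  have hgrad_ind : Integrable (fun x => 1 / 2 * ‖fderiv ℝ φ x‖ ^ 2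
      + indicator {y | 0 < φ y} (fun _ => (1 : ℝ)) x) μ := hgrad.add hind
  refine ⟨hgrad_ind.sub hpow, ?_⟩
  rw [integral_sub hgrad_ind hpow, integral_add hgrad hind, integral_const_mul,
    integral_const_mul, integral_indicator_const _ hpos_meas, smul_eq_mul, mul_one]
  rfl

lemma ae_fderiv_eq_fderiv_min_one_add_fderiv_excess [μ.IsAddHaarMeasure] {K : NNReal}
    (hf : LipschitzWith K f) :
    ∀ᵐ x ∂μ, fderiv ℝ f x = fderiv ℝ (fun y => min (f y) 1) x + fderiv ℝ (excess f) x := by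
  filter_upwards [(hf.min_const 1).ae_differentiableAt,
    (lipschitzWith_excess hf).ae_differentiableAt] with x hmin hexcess
  rw [← fderiv_add hmin hexcess]
  exact congrArg (fderiv ℝ · x) (funext fun y => (min_one_add_excess f y).symm)

lemma ae_norm_fderiv_sq_eq [μ.IsAddHaarMeasure] {K : NNReal} (hf : LipschitzWith K f) :
    ∀ᵐ x ∂μ, ‖fderiv ℝ f x‖ ^ 2 =
      ‖fderiv ℝ (fun y => min (f y) 1) x‖ ^ 2 + ‖fderiv ℝ (excess f) x‖ ^ 2 := by
  filter_upwards [ae_fderiv_eq_fderiv_min_one_add_fderiv_excess μ hf] with x hx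
  rw [hx]
  rcases le_total (f x) 1 with hfx | hfx
  · simp [fderiv_excess_of_le hfx]
  · simp [fderiv_min_one_of_ge hfx]

end BumpEnergy

section AddBump

variable {α : Type*} {u φ : α → ℝ} {x : α}

lemma eq_zero_of_le_one (hφ : 0 ≤ φ x) (hφu : 0 < φ x → 1 < u x) (hx : u x ≤ 1) : φ x = 0 :=
  hφ.antisymm' (not_lt.1 fun h => hx.not_gt (hφu h))

lemma min_one_add_eq_of_le_one (hφ : 0 ≤ φ x) (hφu : 0 < φ x → 1 < u x) (hx : u x ≤ 1) :
    min (u x) 1 + φ x = u x := by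
  rw [eq_zero_of_le_one hφ hφu hx, min_eq_left hx, add_zero]

lemma min_min_one_add_one (hφ : 0 ≤ φ x) (hφu : 0 < φ x → 1 < u x) :
    min (min (u x) 1 + φ x) 1 = min (u x) 1 := by
  rcases le_or_gt (u x) 1 with hx | hx
  · rw [min_one_add_eq_of_le_one hφ hφu hx]
  · simp [hx.le, hφ]

lemma excess_min_one_add (hφ : 0 ≤ φ x) (hφu : 0 < φ x → 1 < u x) :
    excess (fun y => min (u y) 1 + φ y) x = φ x := by
  have hsplit := min_one_add_excess (fun y => min (u y) 1 + φ y) x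
  rw [min_min_one_add_one hφ hφu] at hsplit
  exact add_left_cancel hsplit

end AddBump

section NehariMinimizer

variable {N : ℕ} {Ω : Set (EuclideanSpace ℝ (Fin N))} {p : ℝ} {K : NNReal}
  {u v : EuclideanSpace ℝ (Fin N) → ℝ}

/-- `u` minimizes `J` on the Nehari manifold
`∫_{Ω ∩ {u>1}} |∇u|² = ∫_{Ω ∩ {u>1}} (u-1)^p > 0`, among the Lipschitz competitors that agree with
`u` on `{u ≤ 1}` and do not enlarge `{u > 1}`. -/
structure IsNehariMinimizer (Ω : Set (EuclideanSpace ℝ (Fin N))) (p : ℝ)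
    (u : EuclideanSpace ℝ (Fin N) → ℝ) : Prop where
  nehari : ∫ x in Ω ∩ {x | 1 < u x}, ‖gradient u x‖ ^ 2 =
    ∫ x in Ω ∩ {x | 1 < u x}, (u x - 1) ^ p
  pos : 0 < ∫ x in Ω ∩ {x | 1 < u x}, (u x - 1) ^ p
  J_le : ∀ v : EuclideanSpace ℝ (Fin N) → ℝ, (∃ K : NNReal, LipschitzWith K v) →
    (∀ x, u x ≤ 1 → v x = u x) → {x | 1 < v x} ⊆ {x | 1 < u x} →
    (∫ x in Ω ∩ {x | 1 < v x}, ‖gradient v x‖ ^ 2 = ∫ x in Ω ∩ {x | 1 < v x}, (v x - 1) ^ p) →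
    (0 < ∫ x in Ω ∩ {x | 1 < v x}, (v x - 1) ^ p) → J Ω p u ≤ J Ω p v

lemma norm_gradient_eq (x : EuclideanSpace ℝ (Fin N)) : ‖gradient v x‖ = ‖fderiv ℝ v x‖ := by
  simp [gradient]

lemma setIntegral_norm_gradient_sq (hv : LipschitzWith K v) (hsub : {x | 1 < v x} ⊆ Ω) :
    ∫ x in Ω ∩ {x | 1 < v x}, ‖gradient v x‖ ^ 2 = dirichletIntegral volume (excess v) := by
  have hzero (x) (hx : x ∉ {x | 1 < v x}) : ‖fderiv ℝ (excess v) x‖ ^ 2 = 0 := by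
    rw [fderiv_excess_of_le (not_lt.1 hx), norm_zero, zero_pow two_ne_zero]
  rw [inter_eq_right.2 hsub, dirichletIntegral,
    ← setIntegral_eq_integral_of_forall_compl_eq_zero hzero]
  refine setIntegral_congr_ae (isOpen_lt continuous_const hv.continuous).measurableSet ?_
  filter_upwards [ae_fderiv_eq_fderiv_min_one_add_fderiv_excess volume hv] with x hx hvx
  rw [norm_gradient_eq, hx, fderiv_min_one_of_ge (le_of_lt hvx), zero_add]

lemma setIntegral_sub_one_rpow (hp : p ≠ 0) (hv : Continuous v) (hsub : {x | 1 < v x} ⊆ Ω) :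
    ∫ x in Ω ∩ {x | 1 < v x}, (v x - 1) ^ p = powIntegral volume p (excess v) := by
  have hzero (x) (hx : x ∉ {x | 1 < v x}) : excess v x ^ p = 0 := by
    rw [excess_of_le (not_lt.1 hx), Real.zero_rpow hp]
  rw [inter_eq_right.2 hsub, powIntegral, ← setIntegral_eq_integral_of_forall_compl_eq_zero hzero]
  refine setIntegral_congr_fun (isOpen_lt continuous_const hv).measurableSet fun x hx => ?_
  simp only [excess_of_ge (le_of_lt hx)]

lemma hasCompactSupport_excess (hv : Bornology.IsBounded {x | 1 < v x}) :
    HasCompactSupport (excess v) :=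
  .of_support_subset_isCompact hv.isCompact_closure (support_excess_subset.trans subset_closure)

lemma J_eq_add_bumpEnergy (hΩm : MeasurableSet Ω) (hΩ : Bornology.IsBounded Ω) (hp : 0 < p)
    (hv : LipschitzWith K v) (hsub : {x | 1 < v x} ⊆ Ω) :
    J Ω p v = (∫ x in Ω, 1 / 2 * ‖fderiv ℝ (fun y => min (v y) 1) x‖ ^ 2)
      + bumpEnergy volume p (excess v) := by
  obtain ⟨hdensity, hbump⟩ := integrable_bumpEnergy_density_and_integral_eq volume
    (lipschitzWith_excess hv) (hasCompactSupport_excess (hΩ.subset hsub)) hp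
  have hzero (x) (hx : x ∉ Ω) : 1 / 2 * ‖fderiv ℝ (excess v) x‖ ^ 2
      + indicator {y | 0 < excess v y} (fun _ => (1 : ℝ)) x - 1 / p * excess v x ^ p = 0 := by
    have hvx : v x ≤ 1 := not_lt.1 fun h => hx (hsub h)
    simp [fderiv_excess_of_le hvx, excess_of_le hvx, Real.zero_rpow hp.ne']
  rw [← hbump, ← setIntegral_eq_integral_of_forall_compl_eq_zero hzero, ← integral_add
    ((integrableOn_norm_fderiv_sq volume (hv.min_const 1) hΩ).const_mul _)
    hdensity.integrableOn, J]
  refine setIntegral_congr_ae hΩm ?_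
  filter_upwards [ae_norm_fderiv_sq_eq volume hv] with x hx _
  simp only [norm_gradient_eq, hx, excess_pos_iff]
  rw [excess]
  ring

lemma IsNehariMinimizer.isBumpMinimizer (hmin : IsNehariMinimizer Ω p u) (hΩm : MeasurableSet Ω)
    (hΩ : Bornology.IsBounded Ω) (hp : 0 < p) (hu : LipschitzWith K u)
    (hsub : {x | 1 < u x} ⊆ Ω) : IsBumpMinimizer volume p (excess u) := by
  have hnehari : dirichletIntegral volume (excess u) = powIntegral volume p (excess u) := by
    rw [← setIntegral_norm_gradient_sq hu hsub, hmin.nehari,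
      setIntegral_sub_one_rpow hp.ne' hu.continuous hsub]
  refine ⟨hnehari, ?_, ?_⟩
  · rw [hnehari, ← setIntegral_sub_one_rpow hp.ne' hu.continuous hsub]
    exact hmin.pos
  rintro φ ⟨K', hφ⟩ hφ_nonneg hφ_pos hφ_nehari hD_pos
  have hφu (x) : 0 < φ x → 1 < u x := fun hx => excess_pos_iff.1 (hφ_pos x hx)
  obtain ⟨v, hv_def⟩ : ∃ v, v = fun x => min (u x) 1 + φ x := ⟨_, rfl⟩
  have hv : LipschitzWith (K + K') v := hv_def ▸ (hu.min_const 1).add hφ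
  have hmin_v : (fun x => min (v x) 1) = fun x => min (u x) 1 :=
    funext fun x => by rw [hv_def]; exact min_min_one_add_one (hφ_nonneg x) (hφu x)
  have hexcess_v : excess v = φ :=
    funext fun x => by rw [hv_def]; exact excess_min_one_add (hφ_nonneg x) (hφu x)
  have hv_sub : {x | 1 < v x} ⊆ {x | 1 < u x} := fun x hx =>
    hφu x (hexcess_v ▸ excess_pos_iff.2 hx)
  have hD_v := setIntegral_norm_gradient_sq hv (hv_sub.trans hsub)
  have hP_v := setIntegral_sub_one_rpow hp.ne' hv.continuous (hv_sub.trans hsub)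
  have hJ := hmin.J_le v ⟨_, hv⟩
    (fun x hx => by rw [hv_def]; exact min_one_add_eq_of_le_one (hφ_nonneg x) (hφu x) hx) hv_sub
    (by rw [hD_v, hP_v, hexcess_v, hφ_nehari]) (by rwa [hP_v, hexcess_v, ← hφ_nehari])
  rwa [J_eq_add_bumpEnergy hΩm hΩ hp hu hsub, J_eq_add_bumpEnergy hΩm hΩ hp hv (hv_sub.trans hsub),
    hmin_v, hexcess_v, add_le_add_iff_left] at hJ

end NehariMinimizer

section Truncation

lemma lipschitzWith_max_dist_sub_zero {X : Type*} [PseudoMetricSpace X] (x₀ : X) (a : ℝ) :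
    LipschitzWith 1 fun x => max (dist x x₀ - a) 0 := by
  have hsub : LipschitzWith 1 fun x => dist x x₀ - a := by
    simpa using (LipschitzWith.dist_left x₀).sub (LipschitzWith.const a)
  exact hsub.max_const 0

/-- The function that truncates a `K`-Lipschitz bump of height at most `β * ρ` on `closedBall x₀ ρ`:
it vanishes on the half ball, has slope `2 * β` on the rest of the ball, and dominates the bump
outside. -/
noncomputable def cutoff {X : Type*} [PseudoMetricSpace X] (x₀ : X) (ρ β K : ℝ) (x : X) : ℝ :=
  2 * β * max (dist x x₀ - ρ / 2) 0 + K * max (dist x x₀ - ρ) 0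

section Metric

variable {X : Type*} [PseudoMetricSpace X] {w : X → ℝ} {x₀ x : X} {ρ β K : ℝ}

lemma exists_lipschitzWith_cutoff (x₀ : X) (ρ β K : ℝ) :
    ∃ C, LipschitzWith C (cutoff x₀ ρ β K) :=
  ⟨_, ((lipschitzWith_smul (2 * β)).comp (lipschitzWith_max_dist_sub_zero x₀ (ρ / 2))).add
    ((lipschitzWith_smul K).comp (lipschitzWith_max_dist_sub_zero x₀ ρ))⟩

lemma cutoff_nonneg (hβ : 0 ≤ β) (hK : 0 ≤ K) : 0 ≤ cutoff x₀ ρ β K x := by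
  unfold cutoff
  positivity

lemma cutoff_of_mem_closedBall (hx : x ∈ closedBall x₀ ρ) :
    cutoff x₀ ρ β K x = 2 * β * max (dist x x₀ - ρ / 2) 0 := by
  rw [cutoff, max_eq_right (sub_nonpos.2 (mem_closedBall.1 hx)), mul_zero, add_zero]

lemma cutoff_pos_iff (hρ : 0 < ρ) (hβ : 0 < β) (hK : 0 ≤ K) :
    0 < cutoff x₀ ρ β K x ↔ x ∉ closedBall x₀ (ρ / 2) := by
  rw [mem_closedBall, not_le]
  refine ⟨fun hpos => ?_, fun hx => ?_⟩
  · by_contra! hx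
    rw [cutoff, max_eq_right (by linarith), max_eq_right (by linarith)] at hpos
    simp at hpos
  · have hmax : 0 < max (dist x x₀ - ρ / 2) 0 := lt_max_of_lt_left (by linarith)
    exact add_pos_of_pos_of_nonneg (mul_pos (by positivity) hmax) (by positivity)

lemma setOf_min_cutoff_pos (hρ : 0 < ρ) (hβ : 0 < β) (hK : 0 ≤ K) :
    {x | 0 < min (w x) (cutoff x₀ ρ β K x)} = {x | 0 < w x} \ closedBall x₀ (ρ / 2) := by
  ext x
  exact lt_min_iff.trans (and_congr_right fun _ => cutoff_pos_iff hρ hβ hK)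

lemma hasCompactSupport_min_cutoff (hsupp : HasCompactSupport w) (hβ : 0 ≤ β) (hK : 0 ≤ K) :
    HasCompactSupport fun x => min (w x) (cutoff x₀ ρ β K x) := by
  refine hsupp.mono fun x hx hwx => hx ?_
  simp only [hwx, min_eq_left (cutoff_nonneg hβ hK)]

end Metric

variable {E : Type*} [NormedAddCommGroup E] [NormedSpace ℝ E] {w : E → ℝ} {x₀ x : E} {ρ b β : ℝ}
  {K : NNReal}

lemma le_add_mul_dist_sub_of_le_closedBall (hw : LipschitzWith K w) (hρ : 0 ≤ ρ)
    (hb : ∀ y ∈ closedBall x₀ ρ, w y ≤ b) (hx : x ∉ ball x₀ ρ) :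
    w x ≤ b + K * (dist x x₀ - ρ) := by
  rw [mem_ball, not_lt] at hx
  obtain ⟨y, hxy, hy⟩ := exists_dist_le_le (sub_nonneg.2 hx) hρ
    (by linarith : dist x x₀ ≤ ρ + (dist x x₀ - ρ))
  have hdist : |w x - w y| ≤ K * (dist x x₀ - ρ) :=
    (hw.dist_le_mul x y).trans (mul_le_mul_of_nonneg_left hxy K.coe_nonneg)
  linarith [hb y hy, (abs_le.1 hdist).2]

lemma le_cutoff_of_notMem_ball (hw : LipschitzWith K w) (hρ : 0 < ρ) (hβ : 0 ≤ β)
    (hb : ∀ y ∈ closedBall x₀ ρ, w y ≤ β * ρ) (hx : x ∉ ball x₀ ρ) : w x ≤ cutoff x₀ ρ β K x := by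
  have hle := le_add_mul_dist_sub_of_le_closedBall hw hρ.le hb hx
  rw [mem_ball, not_lt] at hx
  have hslope : β * ρ ≤ 2 * β * max (dist x x₀ - ρ / 2) 0 := by
    calc β * ρ = 2 * β * (ρ / 2) := by ring
      _ ≤ 2 * β * max (dist x x₀ - ρ / 2) 0 := by
        gcongr
        exact le_max_of_le_left (by linarith)
  rw [cutoff, max_eq_left (sub_nonneg.2 hx)]
  linarith

lemma norm_fderiv_min_cutoff_le (hw : ContinuousAt w x) (hβ : 0 ≤ β)
    (hx : x ∈ ball x₀ ρ) (hlt : cutoff x₀ ρ β K x < w x) :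
    ‖fderiv ℝ (fun y => min (w y) (cutoff x₀ ρ β K y)) x‖ ≤ 2 * β := by
  obtain ⟨_, hcutoff⟩ := exists_lipschitzWith_cutoff x₀ ρ β K
  have hlocal : (fun y => min (w y) (cutoff x₀ ρ β K y)) =ᶠ[nhds x]
      fun y => 2 * β * max (dist y x₀ - ρ / 2) 0 := by
    filter_upwards [hcutoff.continuous.continuousAt.eventually_lt hw hlt,
      isOpen_ball.mem_nhds hx] with y hy hyρ
    rw [min_eq_right hy.le, cutoff_of_mem_closedBall (ball_subset_closedBall hyρ)]
  have hlip := (lipschitzWith_smul (2 * β)).comp (lipschitzWith_max_dist_sub_zero x₀ (ρ / 2))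
  rw [hlocal.fderiv_eq]
  refine (norm_fderiv_le_of_lipschitz ℝ hlip).trans_eq ?_
  rw [mul_one, coe_nnnorm, Real.norm_of_nonneg (by positivity)]

lemma integral_le_integral_add_mul_measureReal {X : Type*} [MeasurableSpace X] {μ : Measure X}
    {f g : X → ℝ} {s : Set X} {c : ℝ} (hs : MeasurableSet s) (hμs : μ s ≠ ⊤)
    (hf : Integrable f μ) (hg : Integrable g μ)
    (hle : ∀ᵐ x ∂μ, f x ≤ g x + s.indicator (fun _ => c) x) :
    ∫ x, f x ∂μ ≤ ∫ x, g x ∂μ + c * μ.real s := by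
  have hind : Integrable (s.indicator fun _ => c) μ :=
    (integrable_indicator_iff hs).2 (integrableOn_const hμs)
  refine (integral_mono_ae hf (hg.add hind) hle).trans_eq ?_
  simp only [Pi.add_apply]
  rw [integral_add hg hind, integral_indicator_const _ hs, smul_eq_mul, mul_comm]

variable [FiniteDimensional ℝ E] [MeasurableSpace E] [BorelSpace E] (μ : Measure E)
  [μ.IsAddHaarMeasure]

lemma ae_fderiv_min_cutoff (hw : LipschitzWith K w) (hρ : 0 < ρ) (hβ : 0 ≤ β)
    (hb : ∀ y ∈ closedBall x₀ ρ, w y ≤ β * ρ) :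
    ∀ᵐ x ∂μ, fderiv ℝ (fun y => min (w y) (cutoff x₀ ρ β K y)) x = fderiv ℝ w x ∨
      x ∈ closedBall x₀ ρ ∧
        ‖fderiv ℝ (fun y => min (w y) (cutoff x₀ ρ β K y)) x‖ ≤ 2 * β := by
  obtain ⟨_, hcutoff⟩ := exists_lipschitzWith_cutoff x₀ ρ β K
  filter_upwards [hw.ae_differentiableAt, (hw.min hcutoff).ae_differentiableAt]
    with x hdiff hdiff_min
  rcases le_or_gt (w x) (cutoff x₀ ρ β K x) with hx | hx
  · exact .inl (fderiv_min_of_le hdiff hdiff_min hx)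
  · have hxρ : x ∈ ball x₀ ρ := by
      by_contra hxρ
      exact hx.not_ge (le_cutoff_of_notMem_ball hw hρ hβ hb hxρ)
    exact .inr ⟨ball_subset_closedBall hxρ,
      norm_fderiv_min_cutoff_le hw.continuous.continuousAt hβ hxρ hx⟩

variable {μ}

lemma dirichletIntegral_min_cutoff_le (hw : LipschitzWith K w) (hsupp : HasCompactSupport w)
    (hρ : 0 < ρ) (hβ : 0 ≤ β) (hb : ∀ y ∈ closedBall x₀ ρ, w y ≤ β * ρ) :
    dirichletIntegral μ (fun x => min (w x) (cutoff x₀ ρ β K x)) ≤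
      dirichletIntegral μ w + (2 * β) ^ 2 * μ.real (closedBall x₀ ρ) := by
  obtain ⟨_, hcutoff⟩ := exists_lipschitzWith_cutoff x₀ ρ β K
  refine integral_le_integral_add_mul_measureReal measurableSet_closedBall
    measure_closedBall_lt_top.ne
    (integrable_norm_fderiv_sq μ (hw.min hcutoff)
      (hasCompactSupport_min_cutoff hsupp hβ K.coe_nonneg))
    (integrable_norm_fderiv_sq μ hw hsupp) ?_
  filter_upwards [ae_fderiv_min_cutoff μ hw hρ hβ hb] with x hx
  rcases hx with hx | ⟨hxρ, hx⟩
  · rw [hx]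
    exact le_add_of_nonneg_right (indicator_nonneg (fun _ _ => sq_nonneg _) x)
  · rw [indicator_of_mem hxρ]
    exact le_add_of_nonneg_of_le (sq_nonneg _) (pow_le_pow_left₀ (norm_nonneg _) hx 2)

lemma dirichletIntegral_le_dirichletIntegral_min_cutoff_add (hw : LipschitzWith K w)
    (hsupp : HasCompactSupport w) (hρ : 0 < ρ) (hβ : 0 ≤ β)
    (hb : ∀ y ∈ closedBall x₀ ρ, w y ≤ β * ρ) :
    dirichletIntegral μ w ≤ dirichletIntegral μ (fun x => min (w x) (cutoff x₀ ρ β K x)) +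
      (K : ℝ) ^ 2 * μ.real (closedBall x₀ ρ) := by
  obtain ⟨_, hcutoff⟩ := exists_lipschitzWith_cutoff x₀ ρ β K
  refine integral_le_integral_add_mul_measureReal measurableSet_closedBall
    measure_closedBall_lt_top.ne (integrable_norm_fderiv_sq μ hw hsupp)
    (integrable_norm_fderiv_sq μ (hw.min hcutoff)
      (hasCompactSupport_min_cutoff hsupp hβ K.coe_nonneg)) ?_
  filter_upwards [ae_fderiv_min_cutoff μ hw hρ hβ hb] with x hx
  rcases hx with hx | ⟨hxρ, -⟩
  · rw [hx]
    exact le_add_of_nonneg_right (indicator_nonneg (fun _ _ => sq_nonneg _) x)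
  · rw [indicator_of_mem hxρ]
    exact le_add_of_nonneg_of_le (sq_nonneg _)
      (pow_le_pow_left₀ (norm_nonneg _) (norm_fderiv_le_of_lipschitz ℝ hw) 2)

lemma powIntegral_le_powIntegral_min_cutoff_add {p : ℝ} (hp : 0 < p)
    (hw : LipschitzWith K w) (hw₀ : ∀ x, 0 ≤ w x) (hsupp : HasCompactSupport w) (hρ : 0 < ρ)
    (hβ : 0 ≤ β) (hb : ∀ y ∈ closedBall x₀ ρ, w y ≤ β * ρ) :
    powIntegral μ p w ≤ powIntegral μ p (fun x => min (w x) (cutoff x₀ ρ β K x)) +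
      (β * ρ) ^ p * μ.real (closedBall x₀ ρ) := by
  obtain ⟨_, hcutoff⟩ := exists_lipschitzWith_cutoff x₀ ρ β K
  refine integral_le_integral_add_mul_measureReal measurableSet_closedBall
    measure_closedBall_lt_top.ne (integrable_rpow μ hw.continuous hsupp hp)
    (integrable_rpow μ (hw.min hcutoff).continuous
      (hasCompactSupport_min_cutoff hsupp hβ K.coe_nonneg) hp) (.of_forall fun x => ?_)
  by_cases hx : x ∈ closedBall x₀ ρ
  · rw [indicator_of_mem hx]
    have hmin_nonneg : 0 ≤ min (w x) (cutoff x₀ ρ β K x) :=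
      le_min (hw₀ x) (cutoff_nonneg hβ K.coe_nonneg)
    exact le_add_of_nonneg_of_le (Real.rpow_nonneg hmin_nonneg _)
      (Real.rpow_le_rpow (hw₀ x) (hb x hx) hp.le)
  · have hx' : x ∉ ball x₀ ρ := fun h => hx (ball_subset_closedBall h)
    have hle := le_cutoff_of_notMem_ball hw hρ hβ hb hx'
    simp only [indicator_of_notMem hx, add_zero, min_eq_left hle, le_refl]

end Truncation

section SupNondegeneracy

open Filter Topology

lemma exists_mul_div_rpow_le_one_add_mul (q : ℝ) :
    ∃ s₀ > (0 : ℝ), s₀ < 1 ∧ ∃ C > (0 : ℝ), ∀ s : ℝ, 0 ≤ s → s ≤ s₀ →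
      (1 + s) * ((1 + s) / (1 - s)) ^ q ≤ 1 + C * s := by
  have hdiff : DifferentiableAt ℝ (fun s : ℝ => (1 + s) * ((1 + s) / (1 - s)) ^ q) 0 := by
    have hdiv : DifferentiableAt ℝ (fun s : ℝ => (1 + s) / (1 - s)) 0 :=
      .div (by fun_prop) (by fun_prop) (by simp)
    exact .mul (by fun_prop) (hdiv.rpow_const (.inl (by simp)))
  obtain ⟨C, hC, hbound⟩ := hdiff.hasDerivAt.isBigO_sub.exists_pos
  obtain ⟨ε, hε, hball⟩ := Metric.eventually_nhds_iff.1 hbound.bound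
  refine ⟨min (ε / 2) (1 / 2), by positivity, (min_le_right _ _).trans_lt one_half_lt_one,
    C, hC, fun s hs hs_le => ?_⟩
  have hsε : dist s 0 < ε := by
    rw [Real.dist_0_eq_abs, abs_of_nonneg hs]
    linarith [min_le_left (ε / 2) (1 / 2 : ℝ)]
  have habs := hball hsε
  simp only [Real.norm_eq_abs, sub_zero, add_zero, div_one, Real.one_rpow, mul_one,
    abs_of_nonneg hs] at habs
  linarith [(abs_le.1 habs).2]

lemma exists_div_rpow_mul_le_add_mul {A q : ℝ} (hA : 0 < A) (hq : 0 ≤ q) :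
    ∃ ε > (0 : ℝ), ∃ C > (0 : ℝ), ∀ a b δ : ℝ, 0 ≤ δ → δ ≤ ε → 0 ≤ a → a ≤ A + δ → A ≤ b + δ →
      0 < b ∧ (a / b) ^ q * a ≤ A + C * δ := by
  obtain ⟨s₀, hs₀, hs₀_lt, C, hC, hle⟩ := exists_mul_div_rpow_le_one_add_mul q
  refine ⟨A * s₀, by positivity, C, hC, fun a b δ hδ hδε ha haA hAb => ?_⟩
  obtain ⟨s, rfl⟩ : ∃ s, δ = A * s := ⟨δ / A, by field_simp⟩
  have hs : 0 ≤ s := nonneg_of_mul_nonneg_right hδ hA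
  have hs_le : s ≤ s₀ := le_of_mul_le_mul_left hδε hA
  have hs_pos : 0 < 1 - s := by linarith
  have hAb' : A * (1 - s) ≤ b := by linarith
  have haA' : a ≤ A * (1 + s) := by linarith
  have hb : 0 < b := (mul_pos hA hs_pos).trans_le hAb'
  refine ⟨hb, ?_⟩
  calc (a / b) ^ q * a ≤ (A * (1 + s) / (A * (1 - s))) ^ q * (A * (1 + s)) := by gcongr
    _ = A * ((1 + s) * ((1 + s) / (1 - s)) ^ q) := by
      rw [mul_div_mul_left _ _ hA.ne']
      ring
    _ ≤ A * (1 + C * s) := by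
      gcongr
      exact hle s hs hs_le
    _ = A + C * (A * s) := by ring

lemma rpow_le_sq {b β p : ℝ} (hb : 0 ≤ b) (hbβ : b ≤ β) (hβ : β ≤ 1) (hp : 2 ≤ p) :
    b ^ p ≤ β ^ 2 := by
  rw [← Real.rpow_two]
  exact (Real.rpow_le_rpow hb hbβ (by linarith)).trans
    (Real.rpow_le_rpow_of_exponent_ge_of_imp (hb.trans hbβ) hβ hp fun _ h => by linarith)

lemma measureReal_closedBall_pos {X : Type*} [PseudoMetricSpace X] [ProperSpace X]
    [MeasurableSpace X] {μ : Measure X} [μ.IsOpenPosMeasure] [IsFiniteMeasureOnCompacts μ] (x : X)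
    {ρ : ℝ} (hρ : 0 < ρ) : 0 < μ.real (closedBall x ρ) :=
  ENNReal.toReal_pos (measure_closedBall_pos μ x hρ).ne' measure_closedBall_lt_top.ne

variable {E : Type*} [NormedAddCommGroup E] [NormedSpace ℝ E] [MeasurableSpace E] {μ : Measure E}
  {p : ℝ} {K : NNReal} {w : E → ℝ}

lemma IsBumpMinimizer.exists_measureReal_le_add_mul (hmin : IsBumpMinimizer μ p w) (hp : 2 < p) :
    ∃ ε > (0 : ℝ), ∃ C > (0 : ℝ), ∀ (φ : E → ℝ) (δ : ℝ), (∃ K, LipschitzWith K φ) →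
      (∀ x, 0 ≤ φ x) → (∀ x, 0 < φ x → 0 < w x) → 0 ≤ δ → δ ≤ ε → 0 < dirichletIntegral μ φ →
      dirichletIntegral μ φ ≤ dirichletIntegral μ w + δ →
      powIntegral μ p w ≤ powIntegral μ p φ + δ →
      μ.real {x | 0 < w x} ≤ μ.real {x | 0 < φ x} + C * δ := by
  obtain ⟨ε, hε, C, hC, hscale⟩ := exists_div_rpow_mul_le_add_mul (q := 2 / (p - 2)) hmin.pos
    (div_nonneg zero_le_two (by linarith))
  refine ⟨ε, hε, C, hC, ?_⟩
  rintro φ δ ⟨_, hφ⟩ hφ_nonneg hφ_pos hδ hδε hD hD_le hP_ge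
  obtain ⟨hP, hscaled⟩ := hscale _ _ δ hδ hδε hD.le hD_le (hmin.nehari ▸ hP_ge)
  have hle := hmin.le_of_pos hp hφ hφ_nonneg hφ_pos hD hP
  have hinv_nonneg : 0 ≤ 1 / p := by positivity
  have hinv_le : 1 / p ≤ 1 / 2 := one_div_le_one_div_of_le two_pos hp.le
  have hcoeff : (1 / 2 - 1 / p) * (C * δ) ≤ 1 * (C * δ) := by
    gcongr
    linarith
  linarith [mul_le_mul_of_nonneg_left hscaled (sub_nonneg.2 hinv_le)]

variable [FiniteDimensional ℝ E] [BorelSpace E] [μ.IsAddHaarMeasure]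

lemma exists_measureReal_closedBall_le [Nontrivial E] {ε : ℝ} (hε : 0 < ε) :
    ∃ ρ₀ > (0 : ℝ), ρ₀ ≤ 1 ∧ ∀ (x : E) (ρ : ℝ), 0 ≤ ρ → ρ ≤ ρ₀ → μ.real (closedBall x ρ) ≤ ε := by
  obtain ⟨κ, hκ⟩ : ∃ κ, κ = μ.real (closedBall (0 : E) 1) := ⟨_, rfl⟩
  have hκ_pos : 0 < κ := hκ ▸ measureReal_closedBall_pos 0 one_pos
  refine ⟨min 1 (ε / κ), by positivity, min_le_left _ _, fun x ρ hρ hρ_le => ?_⟩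
  calc μ.real (closedBall x ρ) = ρ ^ Module.finrank ℝ E * κ := by
        rw [Measure.addHaar_real_closedBall' μ x hρ, hκ]
    _ ≤ ρ * κ := by
        gcongr
        exact pow_le_of_le_one hρ (hρ_le.trans (min_le_left _ _)) Module.finrank_pos.ne'
    _ ≤ ε := (le_div_iff₀ hκ_pos).1 (hρ_le.trans (min_le_right _ _))

lemma measureReal_closedBall_half (x : E) {ρ : ℝ} (hρ : 0 ≤ ρ) :
    μ.real (closedBall x (ρ / 2)) * 2 ^ Module.finrank ℝ E = μ.real (closedBall x ρ) := by
  rw [Measure.addHaar_real_closedBall μ x hρ, Measure.addHaar_real_closedBall μ x (by positivity),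
    mul_right_comm, ← mul_pow, div_mul_cancel₀ _ two_ne_zero]

-- Truncating `w` to zero on the half ball saves the volume of the half ball and, as `w` is small
-- on the full ball, costs little energy.
lemma IsBumpMinimizer.exists_measureReal_closedBall_half_le (hmin : IsBumpMinimizer μ p w)
    (hp : 2 < p) (hw : LipschitzWith K w) (hw₀ : ∀ x, 0 ≤ w x) (hsupp : HasCompactSupport w) :
    ∃ ε > (0 : ℝ), ∃ C > (0 : ℝ), ∀ (x₀ : E) (ρ β : ℝ), 0 < ρ → ρ ≤ 1 → 0 < β → β ≤ 1 →
      μ.real (closedBall x₀ ρ) ≤ ε → closedBall x₀ ρ ⊆ {x | 0 < w x} →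
      (∀ y ∈ closedBall x₀ ρ, w y ≤ β * ρ) →
      μ.real (closedBall x₀ (ρ / 2)) ≤ C * β ^ 2 * μ.real (closedBall x₀ ρ) := by
  obtain ⟨ε, hε, C, hC, halmost⟩ := hmin.exists_measureReal_le_add_mul hp
  have hA := hmin.pos
  refine ⟨min (ε / 4) (dirichletIntegral μ w / (K ^ 2 + 1)), by positivity, 4 * C, by positivity,
    fun x₀ ρ β hρ hρ_le hβ hβ_le hsmall hsubset hwβ => ?_⟩
  have hm : 0 < μ.real (closedBall x₀ ρ) := measureReal_closedBall_pos x₀ hρ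
  obtain ⟨_, hcutoff⟩ := exists_lipschitzWith_cutoff x₀ ρ β K
  have hD_le := dirichletIntegral_min_cutoff_le (μ := μ) hw hsupp hρ hβ.le hwβ
  have hD_ge :=
    dirichletIntegral_le_dirichletIntegral_min_cutoff_add (μ := μ) hw hsupp hρ hβ.le hwβ
  have hP_ge := powIntegral_le_powIntegral_min_cutoff_add (μ := μ) (by linarith : 0 < p) hw hw₀
    hsupp hρ hβ.le hwβ
  have hpow : (β * ρ) ^ p ≤ β ^ 2 :=
    rpow_le_sq (by positivity) (mul_le_of_le_one_right hβ.le hρ_le) hβ_le hp.le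
  have hKm : μ.real (closedBall x₀ ρ) * (K ^ 2 + 1) ≤ dirichletIntegral μ w :=
    (le_div_iff₀ (by positivity)).1 (hsmall.trans (min_le_right _ _))
  have hβm : β ^ 2 * μ.real (closedBall x₀ ρ) ≤ 1 * (ε / 4) :=
    mul_le_mul (pow_le_one₀ hβ.le hβ_le) (hsmall.trans (min_le_left _ _)) hm.le zero_le_one
  have hvolume := halmost _ (4 * (β ^ 2 * μ.real (closedBall x₀ ρ))) ⟨_, hw.min hcutoff⟩
    (fun x => le_min (hw₀ x) (cutoff_nonneg hβ.le K.coe_nonneg))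
    (fun x hx => (lt_min_iff.1 hx).1) (by positivity) (by linarith) (by linarith)
    (hD_le.trans_eq (by ring))
    (by linarith [mul_le_mul_of_nonneg_right hpow hm.le, mul_nonneg (sq_nonneg β) hm.le])
  have hfinite : μ {x | 0 < w x} ≠ ⊤ := ((hsupp.isCompact.isBounded.subset
    fun x hx => subset_tsupport w (ne_of_gt hx)).measure_lt_top).ne
  rw [setOf_min_cutoff_pos hρ hβ K.coe_nonneg, measureReal_sdiff
    ((closedBall_subset_closedBall (half_le_self hρ.le)).trans hsubset)
    measurableSet_closedBall hfinite] at hvolume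
  linarith

lemma IsBumpMinimizer.exists_mul_le [Nontrivial E] (hmin : IsBumpMinimizer μ p w) (hp : 2 < p)
    (hw : LipschitzWith K w) (hw₀ : ∀ x, 0 ≤ w x) (hsupp : HasCompactSupport w) :
    ∃ β > (0 : ℝ), ∃ ρ₀ > (0 : ℝ), ∀ (x₀ : E) (ρ : ℝ), 0 < ρ → ρ ≤ ρ₀ →
      closedBall x₀ ρ ⊆ {x | 0 < w x} → ∃ y ∈ closedBall x₀ ρ, β * ρ ≤ w y := by
  obtain ⟨ε, hε, C, hC, hhalf⟩ :=
    hmin.exists_measureReal_closedBall_half_le hp hw hw₀ hsupp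
  obtain ⟨ρ₀, hρ₀, hρ₀_le, hsmall⟩ := exists_measureReal_closedBall_le (μ := μ) hε
  obtain ⟨M, hM⟩ : ∃ M, M = C * 2 ^ Module.finrank ℝ E := ⟨_, rfl⟩
  have hM_pos : 0 < M := by rw [hM]; positivity
  obtain ⟨β, hβ⟩ : ∃ β, β = (1 + M)⁻¹ := ⟨_, rfl⟩
  have hβ_pos : 0 < β := by rw [hβ]; positivity
  have hβ_le : β ≤ 1 := hβ ▸ inv_le_one_of_one_le₀ (by linarith)
  have hβM : β ^ 2 * M < 1 := by
    have hβ_mul : β * (1 + M) = 1 := hβ ▸ inv_mul_cancel₀ (by positivity)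
    nlinarith
  refine ⟨β, hβ_pos, ρ₀, hρ₀, fun x₀ ρ hρ hρ_le hsubset => ?_⟩
  by_contra! hlt
  have hm : 0 < μ.real (closedBall x₀ ρ) := measureReal_closedBall_pos x₀ hρ
  have hle := hhalf x₀ ρ β hρ (hρ_le.trans hρ₀_le) hβ_pos hβ_le (hsmall x₀ ρ hρ.le hρ_le) hsubset
    fun y hy => (hlt y hy).le
  refine lt_irrefl (μ.real (closedBall x₀ ρ)) ?_
  calc μ.real (closedBall x₀ ρ)
      = μ.real (closedBall x₀ (ρ / 2)) * 2 ^ Module.finrank ℝ E :=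
        (measureReal_closedBall_half x₀ hρ.le).symm
    _ ≤ C * β ^ 2 * μ.real (closedBall x₀ ρ) * 2 ^ Module.finrank ℝ E := by gcongr
    _ = β ^ 2 * M * μ.real (closedBall x₀ ρ) := by rw [hM]; ring
    _ < μ.real (closedBall x₀ ρ) := mul_lt_of_lt_one_left hm hβM

end SupNondegeneracy

section Nondegeneracy

variable {N : ℕ} {Ω : Set (EuclideanSpace ℝ (Fin N))} {p : ℝ} {K : NNReal}
  {u : EuclideanSpace ℝ (Fin N) → ℝ}

lemma one_lt_of_dist_lt_infDist {X : Type*} [PseudoMetricSpace X] {f : X → ℝ} {x₀ x : X}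
    (hx : dist x x₀ < infDist x₀ {y | f y ≤ 1}) : 1 < f x := by
  by_contra! hle
  rw [dist_comm] at hx
  exact hx.not_ge (infDist_le_dist_of_mem hle)

lemma IsNehariMinimizer.exists_mul_infDist_le [NeZero N] (hmin : IsNehariMinimizer Ω p u)
    (hΩm : MeasurableSet Ω) (hΩ : Bornology.IsBounded Ω) (hp : 2 < p) (hu : LipschitzWith K u)
    (hsub : {x | 1 < u x} ⊆ Ω) :
    ∃ β > (0 : ℝ), ∃ r₀ > (0 : ℝ), ∀ x₀, 0 < infDist x₀ {x | u x ≤ 1} →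
      infDist x₀ {x | u x ≤ 1} ≤ r₀ →
      ∃ y ∈ closedBall x₀ (infDist x₀ {x | u x ≤ 1} / 4),
        β * infDist x₀ {x | u x ≤ 1} ≤ u y - 1 := by
  have hbump := hmin.isBumpMinimizer hΩm hΩ (by linarith) hu hsub
  obtain ⟨β, hβ, ρ₀, hρ₀, hlarge⟩ := hbump.exists_mul_le hp (lipschitzWith_excess hu)
    (fun _ => excess_nonneg) (hasCompactSupport_excess (hΩ.subset hsub))
  refine ⟨β / 4, by positivity, 4 * ρ₀, by positivity, fun x₀ hr hr_le => ?_⟩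
  have hball {x} (hx : x ∈ closedBall x₀ (infDist x₀ {x | u x ≤ 1} / 4)) : 1 < u x :=
    one_lt_of_dist_lt_infDist (by linarith [mem_closedBall.1 hx])
  obtain ⟨y, hy, hβy⟩ := hlarge x₀ (infDist x₀ {x | u x ≤ 1} / 4) (by positivity) (by linarith)
    fun x hx => excess_pos_iff.2 (hball hx)
  rw [excess_of_ge (hball hy).le] at hβy
  exact ⟨y, hy, by linarith⟩

end Nondegeneracy

theorem stmt_5_general {N : ℕ} (hN : N ≠ 0) {Ω : Set (EuclideanSpace ℝ (Fin N))}
    (hΩm : MeasurableSet Ω) (hΩb : Bornology.IsBounded Ω) {p : ℝ} (hp : 2 < p)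
    {u : EuclideanSpace ℝ (Fin N) → ℝ} {L : NNReal} (hu : LipschitzWith L u)
    (hsub : {x | 1 < u x} ⊆ Ω) (hC2 : ContDiffOn ℝ 2 u {x | 1 < u x})
    (hlap : ∀ x, 1 < u x → lap u x ≤ 0) (hmin : IsNehariMinimizer Ω p u) :
    ∃ r₀ > (0 : ℝ), ∃ c > (0 : ℝ), ∀ x₀, 1 < u x₀ →
      infDist x₀ {x | u x ≤ 1} ≤ r₀ → 1 + c * infDist x₀ {x | u x ≤ 1} ≤ u x₀ := by
  have : NeZero N := ⟨hN⟩
  obtain ⟨β, hβ, r₀, hr₀, hlarge⟩ := hmin.exists_mul_infDist_le hΩm hΩb hp hu hsub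
  obtain ⟨c, hc, hharnack⟩ := exists_mul_le_of_laplacian_nonpos_of_lipschitzWith
    (E := EuclideanSpace ℝ (Fin N)) L hβ
  refine ⟨r₀, hr₀, c, hc, fun x₀ hx₀ hr_le => ?_⟩
  rcases (infDist_nonneg (x := x₀) (s := {x | u x ≤ 1})).eq_or_lt with hr | hr
  · rw [← hr, mul_zero, add_zero]
    exact hx₀.le
  obtain ⟨y, hy, hβy⟩ := hlarge x₀ hr hr_le
  have hball {x} (hx : x ∈ ball x₀ (infDist x₀ {x | u x ≤ 1})) : 1 < u x :=
    one_lt_of_dist_lt_infDist hx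
  have hdiff {x} (hx : 1 < u x) : ContDiffAt ℝ 2 u x :=
    hC2.contDiffAt ((isOpen_lt continuous_const hu.continuous).mem_nhds hx)
  have hlip : LipschitzWith L (u - fun _ => 1) := add_zero L ▸ hu.sub (.const 1)
  have hle : c * infDist x₀ {x | u x ≤ 1} ≤ u x₀ - 1 := hharnack (u - fun _ => 1) x₀ y _ hlip hr
    (fun x hx => (hdiff (hball hx)).sub contDiffAt_const)
    (fun x hx => by simpa [(hdiff (hball hx)).laplacian_sub contDiffAt_const,
      lap_eq_laplacian (hdiff (hball hx))] using hlap x (hball hx))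
    (fun x hx => (sub_pos.2 (hball hx)).le) hy hβy
  linarith

theorem stmt_5 {N : ℕ} (hN : 2 ≤ N) (Ω : Set (EuclideanSpace ℝ (Fin N)))
    (hΩo : IsOpen Ω) (hΩb : Bornology.IsBounded Ω) (p : ℝ) (hp : 2 < p)
    (u : EuclideanSpace ℝ (Fin N) → ℝ) (L : NNReal) (hu : LipschitzWith L u)
    (hcl : closure {x | 1 < u x} ⊆ Ω)
    (hC2 : ContDiffOn ℝ 2 u {x | 1 < u x})
    (heq : ∀ x, 1 < u x → -lap u x = (u x - 1) ^ (p - 1))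
    (hNehari : ∫ x in Ω ∩ {x | 1 < u x}, ‖gradient u x‖ ^ 2
      = ∫ x in Ω ∩ {x | 1 < u x}, (u x - 1) ^ p)
    (hNpos : 0 < ∫ x in Ω ∩ {x | 1 < u x}, (u x - 1) ^ p)
    (hmin : ∀ v : EuclideanSpace ℝ (Fin N) → ℝ,
      (∃ L' : NNReal, LipschitzWith L' v) →
      (∀ x, u x ≤ 1 → v x = u x) →
      {x | 1 < v x} ⊆ {x | 1 < u x} →
      (∫ x in Ω ∩ {x | 1 < v x}, ‖gradient v x‖ ^ 2
        = ∫ x in Ω ∩ {x | 1 < v x}, (v x - 1) ^ p) →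
      (0 < ∫ x in Ω ∩ {x | 1 < v x}, (v x - 1) ^ p) →
      J Ω p u ≤ J Ω p v) :
    ∃ r₀ > (0 : ℝ), ∃ c > (0 : ℝ), ∀ x₀, 1 < u x₀ →
      Metric.infDist x₀ {x | u x ≤ 1} ≤ r₀ →
      1 + c * Metric.infDist x₀ {x | u x ≤ 1} ≤ u x₀ := by
  exact stmt_5_general (by omega) hΩo.measurableSet hΩb hp hu (subset_closure.trans hcl) hC2
    (fun x hx => neg_nonneg.1 (heq x hx ▸ Real.rpow_nonneg (sub_pos.2 hx).le _))
    ⟨hNehari, hNpos, hmin⟩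
end
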